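/- arXiv:1108.6296 — 4 statements merged into one kernel-verified Lean document; each statement's English description precedes it below -/
import Mathlib

section
/- Let K ≥ 1, r ≥ 1, m ≥ 1. Let π be the product measure on W : (∏_{k=1}^K Fin r) → ℝ whose factors are all standard real Gaussians N(0,1). For j = 1,…,m let a_{j,1},…,a_{j,K} ∈ ℝ^r, and let t_1,…,t_m ∈ ℝ. Then the pushforward of π under W ↦ Σ_{j=1}^m t_j · g_W(a_{j,1},…,a_{j,K}) equals the real Gaussian measure with mean 0 and variance Σ_{j=1}^m Σ_{j'=1}^m t_j t_{j'} ∏_{k=1}^K ⟨a_{j,k}, a_{j',k}⟩. -/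
open scoped BigOperators NNReal
open MeasureTheory ProbabilityTheory

/-- A linear form in i.i.d. standard normals is Gaussian. -/
lemma map_pi_gaussian_linear {ι : Type*} [Fintype ι] (c : ι → ℝ) :
    Measure.map (fun W : ι → ℝ => ∑ i, W i * c i)
        (Measure.pi fun _ : ι => gaussianReal 0 1)
      = gaussianReal 0 (∑ i, c i ^ 2).toNNReal := by
  have hind : iIndepFun (fun i (W : ι → ℝ) => W i * c i)
      (Measure.pi fun _ : ι => gaussianReal 0 1) :=
    iIndepFun_pi (X := fun i (x : ℝ) => x * c i) (fun i => by fun_prop)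
  apply Measure.ext_of_charFun
  have h := hind.charFun_map_sum_eq_prod
    (fun i => ((measurable_pi_apply i).mul_const (c i)).aemeasurable)
  have e : (fun W : ι → ℝ => ∑ i, W i * c i) = ∑ i, fun W : ι → ℝ => W i * c i := by
    ext W; simp
  have hm : ∀ i, Measure.map (fun W : ι → ℝ => W i * c i)
      (Measure.pi fun _ : ι => gaussianReal 0 1) = gaussianReal 0 (c i ^ 2).toNNReal := by
    intro i
    have h1 := (measurePreserving_eval (fun _ : ι => gaussianReal 0 1) i).map_eq
    have h2 : (fun W : ι → ℝ => W i * c i) = (fun x => x * c i) ∘ Function.eval i := rfl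
    have h3 : Measurable fun x : ℝ => x * c i := by fun_prop
    have h4 : Measurable (Function.eval i : (ι → ℝ) → ℝ) := measurable_pi_apply i
    rw [h2, ← Measure.map_map h3 h4, h1,
      gaussianReal_map_mul_const]
    congr 1
    · simp
    · ext; simp [sq_nonneg]
  first | rw [e, h] | (simp only [e] ; rw [h])
  ext s
  simp only [Finset.prod_apply, hm, charFun_gaussianReal, ← Complex.exp_sum]
  congr 1
  rw [Real.coe_toNNReal _ (Finset.sum_nonneg fun i _ => sq_nonneg _)]
  simp [sq_nonneg, Finset.sum_mul, Finset.sum_div]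

/-- With an i.i.d. standard normal core tensor `W`, any linear
combination of Tucker contractions `∑ j, t j * g_W(a j 1, …, a j K)` is
Gaussian with mean 0 and variance
`∑ j, ∑ j', t j * t j' * ∏ k, ⟨a j k, a j' k⟩`. -/
theorem map_pi_gaussian_linear_combination_tucker
    (K r m : ℕ) (hK : 1 ≤ K) (hr : 1 ≤ r) (hm : 1 ≤ m)
    (a : Fin m → Fin K → Fin r → ℝ) (t : Fin m → ℝ) :
    Measure.map
        (fun W : (Fin K → Fin r) → ℝ =>
          ∑ j : Fin m, t j *
            ∑ i : Fin K → Fin r, W i * ∏ k : Fin K, a j k (i k))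
        (Measure.pi fun _ : Fin K → Fin r => gaussianReal 0 1)
      = gaussianReal 0
          (∑ j : Fin m, ∑ j' : Fin m,
              t j * t j' * ∏ k : Fin K, ∑ x : Fin r, a j k x * a j' k x).toNNReal := by
  have e : (fun W : (Fin K → Fin r) → ℝ =>
          ∑ j : Fin m, t j *
            ∑ i : Fin K → Fin r, W i * ∏ k : Fin K, a j k (i k))
      = fun W => ∑ i, W i * ∑ j, t j * ∏ k, a j k (i k) := by
    ext W
    simp only [Finset.mul_sum]
    rw [Finset.sum_comm]
    refine Finset.sum_congr rfl fun i _ => Finset.sum_congr rfl fun j _ => by ring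
  rw [e, map_pi_gaussian_linear]
  congr 2
  simp only [Finset.prod_univ_sum, Fintype.piFinset_univ, sq,
    Finset.mul_sum, Finset.prod_mul_distrib]
  rw [Finset.sum_comm]
  refine Finset.sum_congr rfl fun j _ => ?_
  rw [Finset.sum_comm]
  refine Finset.sum_congr rfl fun i _ => ?_
  rw [Finset.sum_mul]
  refine Finset.sum_congr rfl fun j' _ => by ring
end

section
/- (Theorem 1, finite-dimensional marginal form.) Let K ≥ 1 and m ≥ 1, let t_1,…,t_m ∈ ℝ, and let Σ : Fin K → Fin m → Fin m → ℝ. Suppose for each r ∈ ℕ we are given a dimension d_r ≥ 1 and feature vectors a^{(r)}_{j,k} ∈ ℝ^{d_r} (j = 1,…,m, k = 1,…,K) such that for all k, j, j', ⟨a^{(r)}_{j,k}, a^{(r)}_{j',k}⟩ → Σ k j j' as r → ∞. Let π_r be the product measure on W : (∏_{k=1}^K Fin d_r) → ℝ with all factors standard Gaussian N(0,1), and let μ_r be the pushforward of π_r under W ↦ Σ_{j=1}^m t_j Σ_{i ∈ ∏_k Fin d_r} W(i) ∏_{k=1}^K a^{(r)}_{j,k}(i_k). Then μ_r converges weakly to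 the real Gaussian measure N(0, Σ_{j,j'} t_j t_{j'} ∏_{k=1}^K Σ k j j') as r → ∞. -/
open scoped BigOperators NNReal
open MeasureTheory ProbabilityTheory Filter

/-- A linear combination of i.i.d. standard Gaussians is Gaussian. -/
lemma map_sum_pi_gaussian {ι : Type*} [Fintype ι] (c : ι → ℝ) :
    Measure.map (fun W : ι → ℝ => ∑ i, c i * W i)
      (Measure.pi fun _ : ι => gaussianReal 0 1) =
      gaussianReal 0 (∑ i, c i ^ 2).toNNReal := by
  have hmeas : Measurable (fun W : ι → ℝ => ∑ i, c i * W i) := by fun_prop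
  haveI : IsProbabilityMeasure (Measure.map (fun W : ι → ℝ => ∑ i, c i * W i)
      (Measure.pi fun _ : ι => gaussianReal 0 1)) :=
    Measure.isProbabilityMeasure_map hmeas.aemeasurable
  apply Measure.ext_of_charFun
  ext s
  rw [charFun_gaussianReal, charFun_apply_real, integral_map hmeas.aemeasurable
    (by fun_prop)]
  have h1 : ∀ W : ι → ℝ, Complex.exp (s * ((∑ i, c i * W i : ℝ) : ℂ) * Complex.I) =
      ∏ i, Complex.exp (((s * c i : ℝ) : ℂ) * (W i : ℂ) * Complex.I) := by
    intro W
    rw [← Complex.exp_sum]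
    congr 1
    push_cast
    rw [Finset.mul_sum, Finset.sum_mul]
    exact Finset.sum_congr rfl fun i _ => by ring
  simp_rw [h1]
  rw [integral_fintype_prod_eq_prod (𝕜 := ℂ)
    (f := fun i (x : ℝ) => Complex.exp (((s * c i : ℝ) : ℂ) * (x : ℂ) * Complex.I))]
  have h2 : ∀ i, ∫ x : ℝ, Complex.exp (((s * c i : ℝ) : ℂ) * (x : ℂ) * Complex.I)
      ∂(gaussianReal 0 1) = Complex.exp (-((c i : ℂ) ^ 2 * s ^ 2 / 2)) := by
    intro i
    rw [← charFun_apply_real, charFun_gaussianReal]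
    congr 1
    push_cast
    ring
  simp_rw [h2]
  rw [← Complex.exp_sum]
  congr 1
  have h3 : (((∑ i, c i ^ 2).toNNReal : ℝ) : ℂ) = ∑ i, (c i : ℂ) ^ 2 := by
    rw [Real.coe_toNNReal _ (Finset.sum_nonneg fun i _ => sq_nonneg _)]
    push_cast
    rfl
  rw [h3, Finset.sum_neg_distrib, ← Finset.sum_div, ← Finset.sum_mul]
  push_cast
  ring

lemma gaussian_integral_scale (v : ℝ) (f : BoundedContinuousFunction ℝ ℝ) :
    ∫ y, f y ∂(gaussianReal 0 v.toNNReal) =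
      ∫ x, f (Real.sqrt v * x) ∂(gaussianReal 0 1) := by
  have h : gaussianReal 0 v.toNNReal =
      (gaussianReal 0 1).map (fun x => Real.sqrt v * x) := by
    have := gaussianReal_map_const_mul (μ := 0) (v := 1) (Real.sqrt v)
    rw [this]
    congr 1
    · simp
    · ext
      rcases le_total 0 v with hv | hv
      · simp [Real.sq_sqrt hv, hv]
      · simp [Real.sqrt_eq_zero_of_nonpos hv, hv]
  rw [h, integral_map (by fun_prop) (by fun_prop)]

lemma gaussian_tendsto {u : ℕ → ℝ} {v : ℝ} (h : Tendsto u atTop (nhds v))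
    (f : BoundedContinuousFunction ℝ ℝ) :
    Tendsto (fun r => ∫ y, f y ∂(gaussianReal 0 (u r).toNNReal)) atTop
      (nhds (∫ y, f y ∂(gaussianReal 0 v.toNNReal))) := by
  simp_rw [gaussian_integral_scale]
  refine tendsto_integral_of_dominated_convergence (fun _ => ‖f‖) ?_ ?_ ?_ ?_
  · intro n
    fun_prop
  · exact integrable_const _
  · exact fun n => Eventually.of_forall fun x => f.norm_coe_le_norm _
  · refine Eventually.of_forall fun x => ?_
    exact (f.continuous.tendsto _).comp
      (((Real.continuous_sqrt.tendsto v).comp h).mul_const x)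

lemma tucker_variance {K m n : ℕ} (t : Fin m → ℝ) (a : Fin m → Fin K → Fin n → ℝ) :
    ∑ i : Fin K → Fin n, (∑ j, t j * ∏ k, a j k (i k)) ^ 2 =
      ∑ j, ∑ j', t j * t j' * ∏ k, ∑ x, a j k x * a j' k x := by
  simp_rw [Fintype.prod_sum, sq, Finset.sum_mul_sum, Finset.mul_sum]
  rw [Finset.sum_comm]
  refine Finset.sum_congr rfl fun j _ => ?_
  rw [Finset.sum_comm]
  refine Finset.sum_congr rfl fun j' _ => ?_
  refine Finset.sum_congr rfl fun i _ => ?_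
  rw [Finset.prod_mul_distrib]
  ring

/-- Theorem 1, finite-dimensional marginal form: if the mode-wise
feature inner products converge to covariance values `Σ k j j'`, then the law of
the linear combination `∑ j, t j * g^{(r)}_j` of entries of the Tucker tensor
with i.i.d. standard normal core converges weakly to the Gaussian with variance
`∑ j j', t j * t j' * ∏ k, Σ k j j'`. -/
theorem tucker_gaussian_process_convergence
    (K m : ℕ) (hK : 1 ≤ K) (hm : 1 ≤ m) (t : Fin m → ℝ)
    (Sig : Fin K → Fin m → Fin m → ℝ)
    (d : ℕ → ℕ) (hd : ∀ r : ℕ, 1 ≤ d r)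
    (a : (r : ℕ) → Fin m → Fin K → Fin (d r) → ℝ)
    (hconv : ∀ (k : Fin K) (j j' : Fin m),
      Tendsto (fun r : ℕ => ∑ x : Fin (d r), a r j k x * a r j' k x) atTop
        (nhds (Sig k j j')))
    (f : BoundedContinuousFunction ℝ ℝ) :
    Tendsto
      (fun r : ℕ => ∫ y, f y ∂(Measure.map
        (fun W : (Fin K → Fin (d r)) → ℝ =>
          ∑ j : Fin m, t j *
            ∑ i : Fin K → Fin (d r), W i * ∏ k : Fin K, a r j k (i k))
        (Measure.pi fun _ : Fin K → Fin (d r) => gaussianReal 0 1)))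
      atTop
      (nhds (∫ y, f y ∂(gaussianReal 0
        (∑ j : Fin m, ∑ j' : Fin m,
            t j * t j' * ∏ k : Fin K, Sig k j j').toNNReal))) := by
  have key : ∀ r, Measure.map
        (fun W : (Fin K → Fin (d r)) → ℝ =>
          ∑ j : Fin m, t j *
            ∑ i : Fin K → Fin (d r), W i * ∏ k : Fin K, a r j k (i k))
        (Measure.pi fun _ : Fin K → Fin (d r) => gaussianReal 0 1) =
      gaussianReal 0 (∑ j, ∑ j', t j * t j' *
        ∏ k, ∑ x, a r j k x * a r j' k x).toNNReal := by
    intro r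
    rw [← tucker_variance, ← map_sum_pi_gaussian]
    congr 1
    ext W
    simp_rw [Finset.mul_sum, Finset.sum_mul]
    rw [Finset.sum_comm]
    refine Finset.sum_congr rfl fun i _ => Finset.sum_congr rfl fun j _ => ?_
    ring
  simp_rw [key]
  refine gaussian_tendsto ?_ f
  refine tendsto_finsetSum _ fun j _ => tendsto_finsetSum _ fun j' _ => ?_
  exact (tendsto_finsetProd _ fun k _ => hconv k j j').const_mul _
end

section
/- Let ν > 0 and s > 0 be real. Let μ be the pushforward, under the map (y, τ) ↦ y / √τ, of the product of the real Gaussian measure N(0, s²) on ℝ and the Gamma distribution with shape ν/2 and rate ν/2 on (0, ∞). Then μ has density (with respect to Lebesgue measure on ℝ) equal to the Student t density with ν degrees of freedom and scale s: x ↦ Γ((ν+1)/2) / (Γ(ν/2) √(νπ) · s) · (1 + x²/(ν s²))^{−(ν+1)/2}. -/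
open scoped BigOperators NNReal
open MeasureTheory ProbabilityTheory

lemma key_real (ν s x τ : ℝ) (hν : 0 < ν) (hs : 0 < s) (hτ : 0 < τ) :
    gammaPDFReal (ν / 2) (ν / 2) τ *
      ((Real.sqrt (2 * Real.pi * (s ^ 2 / τ)))⁻¹ * Real.exp (-(x - 0) ^ 2 / (2 * (s ^ 2 / τ))))
    = (Real.Gamma ((ν + 1) / 2)
              / (Real.Gamma (ν / 2) * Real.sqrt (ν * Real.pi) * s)
            * (1 + x ^ 2 / (ν * s ^ 2)) ^ (-((ν + 1) / 2))) *
      gammaPDFReal ((ν + 1) / 2) (ν / 2 * (1 + x ^ 2 / (ν * s ^ 2))) τ := by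
  have hw : 0 < 1 + x ^ 2 / (ν * s ^ 2) := by positivity
  have hpi := Real.pi_pos
  have hexp : Real.exp (-(ν / 2 * τ)) * Real.exp (-(x - 0) ^ 2 / (2 * (s ^ 2 / τ)))
      = Real.exp (-(ν / 2 * (1 + x ^ 2 / (ν * s ^ 2)) * τ)) := by
    rw [← Real.exp_add]
    congr 1
    field_simp
    ring
  have h1 : (ν / 2 * (1 + x ^ 2 / (ν * s ^ 2))) ^ ((ν + 1) / 2)
      = (ν / 2) ^ (ν / 2) * (Real.sqrt ν / Real.sqrt 2)
        * (1 + x ^ 2 / (ν * s ^ 2)) ^ ((ν + 1) / 2) := by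
    rw [Real.mul_rpow (by positivity) hw.le, show (ν + 1) / 2 = ν / 2 + 1 / 2 by ring,
      Real.rpow_add (by positivity : 0 < ν / 2) (ν / 2) (1 / 2), ← Real.sqrt_eq_rpow,
      Real.sqrt_div hν.le]
  have h2 : τ ^ ((ν + 1) / 2 - 1) = τ ^ (ν / 2 - 1) * Real.sqrt τ := by
    rw [Real.sqrt_eq_rpow, ← Real.rpow_add hτ]
    congr 1
    ring
  have h3 : Real.sqrt (2 * Real.pi * (s ^ 2 / τ))
      = Real.sqrt 2 * Real.sqrt Real.pi * s / Real.sqrt τ := by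
    rw [Real.sqrt_mul (by positivity), Real.sqrt_mul (by positivity), Real.sqrt_div (by positivity),
      Real.sqrt_sq hs.le]
    ring
  have hG : 0 < Real.Gamma ((ν + 1) / 2) := Real.Gamma_pos_of_pos (by positivity)
  have hG' : 0 < Real.Gamma (ν / 2) := Real.Gamma_pos_of_pos (by positivity)
  simp only [gammaPDFReal, if_pos hτ.le]
  rw [← hexp, h1, h2, h3, Real.rpow_neg hw.le, Real.sqrt_mul hν.le]
  have hwp := Real.rpow_pos_of_pos hw ((ν + 1) / 2)
  generalize (1 + x ^ 2 / (ν * s ^ 2)) ^ ((ν + 1) / 2) = W at *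
  have := Real.sqrt_pos.2 hτ
  have := Real.sqrt_pos.2 hν
  have := Real.sqrt_pos.2 hpi
  generalize Real.exp (-(x - 0) ^ 2 / (2 * (s ^ 2 / τ))) = e1 at *
  generalize Real.exp (-(ν / 2 * τ)) = e2 at *
  generalize τ ^ (ν / 2 - 1) = e3 at *
  generalize (ν / 2) ^ (ν / 2) = e4 at *
  generalize Real.sqrt τ = e5 at *
  generalize Real.sqrt ν = e6 at *
  generalize Real.sqrt Real.pi = e7 at *
  generalize Real.Gamma ((ν + 1) / 2) = e8 at *
  generalize Real.Gamma (ν / 2) = e9 at *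
  field_simp

/-- The scale mixture of a centered Gaussian `N(0, s²)` with a
`Gamma(ν/2, rate ν/2)` precision, i.e. the law of `y / √τ`, has the Student t
density with `ν` degrees of freedom and scale `s`. -/
theorem gaussian_gamma_scale_mixture_is_student_t
    (ν s : ℝ) (hν : 0 < ν) (hs : 0 < s) :
    Measure.map (fun p : ℝ × ℝ => p.1 / Real.sqrt p.2)
        ((gaussianReal 0 (s ^ 2).toNNReal).prod (gammaMeasure (ν / 2) (ν / 2)))
      = volume.withDensity (fun x : ℝ => ENNReal.ofReal
          (Real.Gamma ((ν + 1) / 2)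
              / (Real.Gamma (ν / 2) * Real.sqrt (ν * Real.pi) * s)
            * (1 + x ^ 2 / (ν * s ^ 2)) ^ (-((ν + 1) / 2)))) := by
  have : IsProbabilityMeasure (gammaMeasure (ν / 2) (ν / 2)) :=
    isProbabilityMeasure_gammaMeasure (by positivity) (by positivity)
  have hf : Measurable (fun p : ℝ × ℝ => p.1 / Real.sqrt p.2) := by fun_prop
  have hgm : ∀ a r, Measurable (gammaPDF a r) := fun a r =>
    (measurable_gammaPDFReal a r).ennreal_ofReal
  ext A hA
  set t : ℝ → ℝ := fun x => Real.Gamma ((ν + 1) / 2)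
              / (Real.Gamma (ν / 2) * Real.sqrt (ν * Real.pi) * s)
            * (1 + x ^ 2 / (ν * s ^ 2)) ^ (-((ν + 1) / 2)) with ht
  have ht0 : ∀ x, 0 ≤ t x := fun x => by
    have := Real.Gamma_pos_of_pos (show 0 < (ν + 1) / 2 by positivity)
    have := Real.Gamma_pos_of_pos (show 0 < ν / 2 by positivity)
    simp only [ht]
    positivity
  have htm : Measurable t := by simp only [ht]; fun_prop
  rw [Measure.map_apply hf hA, Measure.prod_apply_symm (hf hA), withDensity_apply _ hA,
    gammaMeasure, lintegral_withDensity_eq_lintegral_mul _ (hgm _ _)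
      (measurable_measure_prodMk_right (hf hA))]
  have hJ : Measurable (fun p : ℝ × ℝ => ENNReal.ofReal (t p.2) *
      gammaPDF ((ν + 1) / 2) (ν / 2 * (1 + p.2 ^ 2 / (ν * s ^ 2))) p.1) := by
    refine (htm.comp measurable_snd).ennreal_ofReal.mul ?_
    unfold gammaPDF gammaPDFReal
    refine Measurable.ennreal_ofReal (Measurable.ite ?_ (by fun_prop) measurable_const)
    exact measurableSet_le measurable_const measurable_fst
  have h0 : ∀ᵐ τ : ℝ, τ ≠ 0 := by simp [ae_iff]
  calc _ = ∫⁻ τ, ∫⁻ x in A, ENNReal.ofReal (t x) *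
      gammaPDF ((ν + 1) / 2) (ν / 2 * (1 + x ^ 2 / (ν * s ^ 2))) τ := by
        refine lintegral_congr_ae ?_
        filter_upwards [h0] with τ hτ
        rcases lt_or_gt_of_ne hτ with h | h
        · simp [gammaPDF_of_neg h]
        · simp only [Pi.mul_apply]
          have hpre : (fun y : ℝ => (y, τ)) ⁻¹' ((fun p : ℝ × ℝ => p.1 / Real.sqrt p.2) ⁻¹' A)
              = (fun y : ℝ => y / Real.sqrt τ) ⁻¹' A := rfl
          have hv : (s ^ 2).toNNReal / NNReal.mk (Real.sqrt τ ^ 2) (sq_nonneg _)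
              = (s ^ 2 / τ).toNNReal := by
            ext
            push_cast
            rw [Real.coe_toNNReal _ (by positivity), Real.coe_toNNReal _ (by positivity)]
            simp [Real.sq_sqrt h.le]
          have hvne : (s ^ 2 / τ).toNNReal ≠ 0 := by
            simp only [ne_eq, Real.toNNReal_eq_zero, not_le]; positivity
          rw [hpre, ← Measure.map_apply (by fun_prop) hA, gaussianReal_map_div_const, hv, zero_div,
            gaussianReal_apply _ hvne, ← lintegral_const_mul _ (measurable_gaussianPDF _ _)]
          refine lintegral_congr fun x => ?_
          rw [gammaPDF, gammaPDF, gaussianPDF, ← ENNReal.ofReal_mul (ht0 x),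
            ← ENNReal.ofReal_mul (gammaPDFReal_nonneg (by positivity) (by positivity) _),
            ← key_real ν s x τ hν hs h, gaussianPDFReal, Real.coe_toNNReal _ (by positivity)]
    _ = ∫⁻ x in A, ∫⁻ τ, ENNReal.ofReal (t x) *
      gammaPDF ((ν + 1) / 2) (ν / 2 * (1 + x ^ 2 / (ν * s ^ 2))) τ :=
        lintegral_lintegral_swap hJ.aemeasurable
    _ = _ := by
        refine lintegral_congr fun x => ?_
        rw [lintegral_const_mul _ (hgm _ _),
          lintegral_gammaPDF_eq_one (by positivity) (by positivity), mul_one]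
end

section
/- (Theorem 2, finite-dimensional marginal form.) Let K ≥ 1, m ≥ 1, ν > 0, let t_1,…,t_m ∈ ℝ, and let Σ : Fin K → Fin m → Fin m → ℝ with Σ_{j,j'} t_j t_{j'} ∏_{k=1}^K Σ k j j' > 0. Suppose for each r ∈ ℕ we are given a dimension d_r ≥ 1 and feature vectors a^{(r)}_{j,k} ∈ ℝ^{d_r} (j = 1,…,m, k = 1,…,K) such that for all k, j, j', ⟨a^{(r)}_{j,k}, a^{(r)}_{j',k}⟩ → Σ k j j' as r → ∞. Let ρ_r be the product of (i) the product measure on Z : (∏_{k=1}^K Fin d_r) → ℝ with all factors standard Gaussian N(0,1) and (ii) the Gamma distribution with shape ν/2 and rate ν/2 on (0,∞), and let μ_r be the pushforward of ρ_r under (Z, τ) ↦ (1/√τ) · Σ_{j=1}^m t_j Σ_{i} Z(i) ∏_{k=1}^K a^{(r)}_{j,k}(i_k). Then μ_r converges weakly, as r → ∞, to the probability measure on ℝ with Student t density with ν degrees of freedom and scale s = √(Σ_{j,j'} t_j t_{j'} ∏_{k=1}^K Σ k j j'). -/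
open scoped BigOperators NNReal
open MeasureTheory ProbabilityTheory Filter

lemma aux_gauss_comb {ι : Type*} [Fintype ι] (c : ι → ℝ) :
    Measure.map (fun Z : ι → ℝ => ∑ i, Z i * c i) (Measure.pi fun _ : ι => gaussianReal 0 1)
      = Measure.map (fun z => Real.sqrt (∑ i, c i ^ 2) * z) (gaussianReal 0 1) := by
  have hm1 : Measurable (fun Z : ι → ℝ => ∑ i, Z i * c i) := by fun_prop
  have : IsProbabilityMeasure (Measure.map (fun Z : ι → ℝ => ∑ i, Z i * c i)
      (Measure.pi fun _ : ι => gaussianReal 0 1)) :=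
    Measure.isProbabilityMeasure_map hm1.aemeasurable
  rw [gaussianReal_map_const_mul]
  apply Measure.ext_of_charFun
  have hind : iIndepFun (fun (i : ι) (Z : ι → ℝ) => Z i * c i)
      (Measure.pi fun _ : ι => gaussianReal 0 1) :=
    iIndepFun_pi (X := fun i x => x * c i) (fun i => by fun_prop)
  rw [hind.charFun_map_fun_sum_eq_prod
    (fun i => Measurable.aemeasurable (by fun_prop))]
  ext s
  have hi : ∀ i, Measure.map (fun Z : ι → ℝ => Z i * c i)
      (Measure.pi fun _ : ι => gaussianReal 0 1)
      = gaussianReal (0 * c i) (.mk (c i ^ 2) (sq_nonneg _) * 1) := by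
    intro i
    have h1 := Measure.map_map (μ := Measure.pi fun _ : ι => gaussianReal 0 1)
      (g := fun x : ℝ => x * c i) (f := Function.eval i) (by fun_prop) (by fun_prop)
    rw [(measurePreserving_eval (fun _ : ι => gaussianReal 0 1) i).map_eq,
      gaussianReal_map_mul_const, mul_comm (c i) 0] at h1
    exact h1.symm
  simp only [Finset.prod_apply, hi, charFun_gaussianReal]
  rw [← Complex.exp_sum]
  congr 1
  have h0 : (0:ℝ) ≤ ∑ i, c i ^ 2 := Finset.sum_nonneg fun i _ => sq_nonneg _
  have : (((Real.sqrt (∑ i, c i ^ 2)) ^ 2 : ℝ) : ℂ) = ∑ i, (c i : ℂ) ^ 2 := by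
    rw [Real.sq_sqrt h0]; push_cast; rfl
  simp
  push_cast at this
  rw [this, Finset.sum_mul, Finset.sum_div]

lemma aux_gamma_int (ν S x : ℝ) (hν : 0 < ν) (hS : 0 < S) :
    ∫⁻ τ, gammaPDF (ν/2) (ν/2) τ * ENNReal.ofReal
      (Real.sqrt τ / Real.sqrt (2 * Real.pi * S) * Real.exp (-(x^2/(2*S) * τ)))
    = ENNReal.ofReal (Real.Gamma ((ν + 1) / 2)
            / (Real.Gamma (ν / 2) * Real.sqrt (ν * Real.pi) * Real.sqrt S)
          * (1 + x ^ 2 / (ν * S)) ^ (-((ν + 1) / 2))) := by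
  have hν2 : 0 < ν/2 := by positivity
  have ha : 0 < (ν+1)/2 := by positivity
  have hr : 0 < ν/2 + x^2/(2*S) := by positivity
  have hG := Real.Gamma_pos_of_pos hν2
  have hG' := Real.Gamma_pos_of_pos ha
  have key := Real.integral_rpow_mul_exp_neg_mul_Ioi ha hr
  set C : ℝ := (ν/2)^(ν/2) / Real.Gamma (ν/2) / Real.sqrt (2 * Real.pi * S) with hC
  have hCpos : 0 ≤ C := by positivity
  have hint : IntegrableOn (fun t : ℝ => t ^ ((ν+1)/2 - 1) *
      Real.exp (-((ν/2 + x^2/(2*S)) * t))) (Set.Ioi 0) := by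
    by_contra h
    have h2 := integral_undef h
    rw [key] at h2
    have : 0 < (1 / (ν/2 + x^2/(2*S))) ^ ((ν+1)/2) * Real.Gamma ((ν+1)/2) := by positivity
    exact this.ne' h2
  have e1 : ∀ τ, gammaPDF (ν/2) (ν/2) τ * ENNReal.ofReal
      (Real.sqrt τ / Real.sqrt (2 * Real.pi * S) * Real.exp (-(x^2/(2*S) * τ)))
      = (Set.Ioi (0:ℝ)).indicator (fun t => ENNReal.ofReal (C * (t ^ ((ν+1)/2 - 1) *
      Real.exp (-((ν/2 + x^2/(2*S)) * t))))) τ := by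
    intro τ
    by_cases h : 0 < τ
    · rw [Set.indicator_of_mem (by exact h), gammaPDF_of_nonneg h.le,
        ← ENNReal.ofReal_mul (by positivity)]
      congr 1
      have e2 : τ ^ ((ν+1)/2 - 1) = τ ^ (ν/2 - 1) * Real.sqrt τ := by
        rw [Real.sqrt_eq_rpow, ← Real.rpow_add h]; congr 1; ring
      have e3 : Real.exp (-((ν/2 + x^2/(2*S)) * τ))
          = Real.exp (-(ν/2 * τ)) * Real.exp (-(x^2/(2*S) * τ)) := by
        rw [← Real.exp_add]; congr 1; ring
      rw [e2, e3, hC]; ring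
    · rw [Set.indicator_of_notMem (by exact h), Real.sqrt_eq_zero'.2 (not_lt.1 h)]
      simp
  simp_rw [e1]
  rw [lintegral_indicator measurableSet_Ioi, ← ofReal_integral_eq_lintegral_ofReal
    (hint.const_mul C), integral_const_mul, key]
  · congr 1
    have e4 : 1 / (ν/2 + x^2/(2*S)) = (ν/2)⁻¹ * (1 + x^2/(ν*S))⁻¹ := by
      field_simp
    have h1 : 0 < 1 + x^2/(ν*S) := by positivity
    have e5 : ((ν/2)⁻¹ : ℝ) ^ ((ν+1)/2) = ((ν/2)^(ν/2))⁻¹ * (Real.sqrt (ν/2))⁻¹ := by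
      rw [Real.inv_rpow hν2.le, Real.sqrt_eq_rpow, ← mul_inv, ← Real.rpow_add hν2]
      congr 2; ring
    have e6 : Real.sqrt (2 * Real.pi * S) * Real.sqrt (ν/2)
        = Real.sqrt (ν * Real.pi) * Real.sqrt S := by
      rw [← Real.sqrt_mul (by positivity), ← Real.sqrt_mul (by positivity)]
      congr 1; ring
    rw [e4, Real.mul_rpow (by positivity) (by positivity), e5, Real.inv_rpow h1.le,
      ← Real.rpow_neg h1.le, hC, mul_assoc (Real.Gamma (ν/2)), ← e6]
    have : (0:ℝ) < (ν/2)^(ν/2) := by positivity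
    have : (0:ℝ) < √(ν/2) := by positivity
    have : (0:ℝ) < √(2 * Real.pi * S) := by positivity
    field_simp
  · filter_upwards [self_mem_ae_restrict measurableSet_Ioi] with t ht
    have : 0 < t := ht
    simp only [Pi.zero_apply]
    positivity

lemma aux_gauss_scale (S τ : ℝ) (hS : 0 < S) (hτ : 0 < τ) :
    Measure.map (fun z => 1 / Real.sqrt τ * (Real.sqrt S * z)) (gaussianReal 0 1)
      = volume.withDensity (fun x => ENNReal.ofReal
        (Real.sqrt τ / Real.sqrt (2 * Real.pi * S) * Real.exp (-(x^2/(2*S) * τ)))) := by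
  have e : (fun z => 1 / Real.sqrt τ * (Real.sqrt S * z))
      = (fun z => (Real.sqrt S / Real.sqrt τ) * z) := by ext z; ring
  have hpos : 0 < (Real.sqrt S / Real.sqrt τ)^2 := by positivity
  have hsq : (Real.sqrt S / Real.sqrt τ)^2 = S / τ := by
    rw [div_pow, Real.sq_sqrt hS.le, Real.sq_sqrt hτ.le]
  rw [e, gaussianReal_map_const_mul, gaussianReal_of_var_ne_zero]
  · congr 1
    ext x
    rw [gaussianPDF, gaussianPDFReal]
    congr 1
    simp only [mul_zero, mul_one, sub_zero, NNReal.coe_mk, hsq]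
    congr 1
    · rw [← mul_div_assoc, Real.sqrt_div (by positivity), inv_div]
    · congr 1; field_simp
  · intro h
    rw [mul_one] at h
    have := congrArg NNReal.toReal h
    simp only [NNReal.coe_mk, NNReal.coe_zero] at this
    exact hpos.ne' this

lemma aux_mixture (ν S : ℝ) (hν : 0 < ν) (hS : 0 < S) :
    Measure.map (fun p : ℝ × ℝ => 1 / Real.sqrt p.2 * (Real.sqrt S * p.1))
      ((gaussianReal 0 1).prod (gammaMeasure (ν / 2) (ν / 2)))
    = volume.withDensity (fun x : ℝ => ENNReal.ofReal
        (Real.Gamma ((ν + 1) / 2)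
            / (Real.Gamma (ν / 2) * Real.sqrt (ν * Real.pi) * Real.sqrt S)
          * (1 + x ^ 2 / (ν * S)) ^ (-((ν + 1) / 2)))) := by
  have hν2 : 0 < ν/2 := by positivity
  have := isProbabilityMeasure_gammaMeasure hν2 hν2
  have hgm : Measurable (gammaPDF (ν/2) (ν/2)) :=
    (measurable_gammaPDFReal _ _).ennreal_ofReal
  refine Measure.ext_of_lintegral _ fun g hg => ?_
  rw [lintegral_map hg (by fun_prop), lintegral_prod_symm' _ (by fun_prop),
    lintegral_withDensity_eq_lintegral_mul _ (by fun_prop) hg]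
  simp only [Pi.mul_apply, ← aux_gamma_int ν S _ hν hS]
  rw [gammaMeasure, lintegral_withDensity_eq_lintegral_mul _ hgm (by
    refine Measurable.lintegral_prod_left' (f := fun p : ℝ × ℝ => 
      g (1 / Real.sqrt p.2 * (Real.sqrt S * p.1))) (by fun_prop))]
  simp only [Pi.mul_apply]
  have step : ∀ τ, gammaPDF (ν/2) (ν/2) τ *
      ∫⁻ z, g (1 / Real.sqrt τ * (Real.sqrt S * z)) ∂(gaussianReal 0 1)
      = ∫⁻ x, gammaPDF (ν/2) (ν/2) τ * ENNReal.ofReal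
      (Real.sqrt τ / Real.sqrt (2 * Real.pi * S) * Real.exp (-(x^2/(2*S) * τ))) * g x 
      ∨ τ = 0 := by
    intro τ
    rcases lt_trichotomy τ 0 with h | h | h
    · left; simp [gammaPDF_of_neg h]
    · right; exact h
    · left
      rw [← lintegral_map (f := g) (g := fun z => 1 / Real.sqrt τ * (Real.sqrt S * z)) hg
        (by fun_prop), aux_gauss_scale S τ hS h,
        lintegral_withDensity_eq_lintegral_mul _ (by fun_prop) hg,
        ← lintegral_const_mul _ (by fun_prop)]
      simp only [Pi.mul_apply, mul_assoc]
  have hne : ∀ᵐ τ : ℝ, τ ≠ 0 := by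
    simp [ae_iff]
  rw [lintegral_congr_ae (hne.mono fun τ h => (step τ).resolve_right h),
    lintegral_lintegral_swap]
  · refine lintegral_congr fun x => ?_
    rw [lintegral_mul_const _ (by fun_prop)]
  · apply Measurable.aemeasurable
    unfold Function.uncurry
    fun_prop

lemma aux_var {K m D : ℕ} (t : Fin m → ℝ) (a : Fin m → Fin K → Fin D → ℝ) :
    ∑ i : Fin K → Fin D, (∑ j, t j * ∏ k, a j k (i k)) ^ 2
      = ∑ j, ∑ j', t j * t j' * ∏ k, ∑ x, a j k x * a j' k x := by
  simp_rw [sq, Finset.sum_mul_sum]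
  rw [Finset.sum_comm]
  refine Finset.sum_congr rfl fun j _ => ?_
  rw [Finset.sum_comm]
  refine Finset.sum_congr rfl fun j' _ => ?_
  rw [Finset.prod_univ_sum, Finset.mul_sum]
  simp only [Fintype.piFinset_univ]
  refine Finset.sum_congr rfl fun i _ => ?_
  rw [Finset.prod_mul_distrib]; ring

/-- Theorem 2, finite-dimensional marginal form: with a core
tensor distributed as a Gaussian/Gamma scale mixture (i.e. a tensor-variate t
with `ν` degrees of freedom), the law of the linear combination of the Tucker
tensor entries converges weakly, as the feature inner products converge to
`Sig k j j'`, to the Student t distribution with `ν` degrees of freedom and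
scale `√(∑ j j', t j * t j' * ∏ k, Sig k j j')`. -/
theorem tucker_t_process_convergence
    (K m : ℕ) (hK : 1 ≤ K) (hm : 1 ≤ m) (ν : ℝ) (hν : 0 < ν)
    (t : Fin m → ℝ) (Sig : Fin K → Fin m → Fin m → ℝ)
    (hpos : 0 < ∑ j : Fin m, ∑ j' : Fin m,
        t j * t j' * ∏ k : Fin K, Sig k j j')
    (d : ℕ → ℕ) (hd : ∀ r : ℕ, 1 ≤ d r)
    (a : (r : ℕ) → Fin m → Fin K → Fin (d r) → ℝ)
    (hconv : ∀ (k : Fin K) (j j' : Fin m),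
      Tendsto (fun r : ℕ => ∑ x : Fin (d r), a r j k x * a r j' k x) atTop
        (nhds (Sig k j j')))
    (f : BoundedContinuousFunction ℝ ℝ) :
    Tendsto
      (fun r : ℕ => ∫ y, f y ∂(Measure.map
        (fun p : ((Fin K → Fin (d r)) → ℝ) × ℝ =>
          (1 / Real.sqrt p.2) *
            ∑ j : Fin m, t j *
              ∑ i : Fin K → Fin (d r), p.1 i * ∏ k : Fin K, a r j k (i k))
        ((Measure.pi fun _ : Fin K → Fin (d r) => gaussianReal 0 1).prod
          (gammaMeasure (ν / 2) (ν / 2)))))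
      atTop
      (nhds (∫ y, f y ∂(volume.withDensity (fun x : ℝ => ENNReal.ofReal
        (Real.Gamma ((ν + 1) / 2)
            / (Real.Gamma (ν / 2) * Real.sqrt (ν * Real.pi)
              * Real.sqrt (∑ j : Fin m, ∑ j' : Fin m,
                  t j * t j' * ∏ k : Fin K, Sig k j j'))
          * (1 + x ^ 2 / (ν * (∑ j : Fin m, ∑ j' : Fin m,
                  t j * t j' * ∏ k : Fin K, Sig k j j')))
              ^ (-((ν + 1) / 2))))))) := by
  have hν2 : 0 < ν/2 := by positivity
  have hprob := isProbabilityMeasure_gammaMeasure hν2 hν2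
  rw [← aux_mixture ν _ hν hpos]
  have hr : ∀ r, Measure.map
        (fun p : ((Fin K → Fin (d r)) → ℝ) × ℝ =>
          (1 / Real.sqrt p.2) *
            ∑ j : Fin m, t j *
              ∑ i : Fin K → Fin (d r), p.1 i * ∏ k : Fin K, a r j k (i k))
        ((Measure.pi fun _ : Fin K → Fin (d r) => gaussianReal 0 1).prod
          (gammaMeasure (ν / 2) (ν / 2)))
      = Measure.map (fun p : ℝ × ℝ => 1 / Real.sqrt p.2 *
          (Real.sqrt (∑ j, ∑ j', t j * t j' * ∏ k, ∑ x, a r j k x * a r j' k x) * p.1))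
      ((gaussianReal 0 1).prod (gammaMeasure (ν / 2) (ν / 2))) := by
    intro r
    have h1 : (fun p : ((Fin K → Fin (d r)) → ℝ) × ℝ =>
          (1 / Real.sqrt p.2) *
            ∑ j : Fin m, t j *
              ∑ i : Fin K → Fin (d r), p.1 i * ∏ k : Fin K, a r j k (i k))
        = (fun q : ℝ × ℝ => 1 / Real.sqrt q.2 * q.1) ∘ Prod.map
          (fun Z : (Fin K → Fin (d r)) → ℝ =>
            ∑ i, Z i * (∑ j, t j * ∏ k, a r j k (i k))) id := by
      ext p
      simp only [Function.comp, Prod.map, id]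
      congr 1
      simp_rw [Finset.mul_sum]
      rw [Finset.sum_comm]
      refine Finset.sum_congr rfl fun i _ => Finset.sum_congr rfl fun j _ => by ring
    have h2 : (fun p : ℝ × ℝ => 1 / Real.sqrt p.2 *
          (Real.sqrt (∑ j, ∑ j', t j * t j' * ∏ k, ∑ x, a r j k x * a r j' k x) * p.1))
        = (fun q : ℝ × ℝ => 1 / Real.sqrt q.2 * q.1) ∘ Prod.map
          (fun z => Real.sqrt (∑ i : Fin K → Fin (d r), (∑ j, t j * ∏ k, a r j k (i k)) ^ 2) * z)
          id := by
      ext p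
      simp only [Function.comp, Prod.map, id, aux_var]
    rw [h1, h2, ← Measure.map_map (by fun_prop) (by fun_prop),
      ← Measure.map_map (by fun_prop) (by fun_prop),
      ← Measure.map_prod_map _ _ (by fun_prop) measurable_id,
      ← Measure.map_prod_map _ _ (by fun_prop) measurable_id, aux_gauss_comb]
  simp_rw [hr]
  have hlim : Tendsto (fun r => Real.sqrt
      (∑ j, ∑ j', t j * t j' * ∏ k, ∑ x, a r j k x * a r j' k x)) atTop
      (nhds (Real.sqrt (∑ j, ∑ j', t j * t j' * ∏ k, Sig k j j'))) := by
    refine (Real.continuous_sqrt.tendsto _).comp ?_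
    refine tendsto_finsetSum _ fun j _ => tendsto_finsetSum _ fun j' _ => ?_
    exact (tendsto_finsetProd _ fun k _ => hconv k j j').const_mul _
  have him : ∀ s : ℝ, ∫ y, f y ∂(Measure.map (fun p : ℝ × ℝ => 1 / Real.sqrt p.2 * (s * p.1))
      ((gaussianReal 0 1).prod (gammaMeasure (ν / 2) (ν / 2))))
      = ∫ p : ℝ × ℝ, f (1 / Real.sqrt p.2 * (s * p.1))
        ∂((gaussianReal 0 1).prod (gammaMeasure (ν / 2) (ν / 2))) := by
    intro s
    rw [integral_map (Measurable.aemeasurable (by fun_prop))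
      f.continuous.aestronglyMeasurable]
  simp_rw [him]
  refine tendsto_integral_of_dominated_convergence (fun _ => ‖f‖) ?_ (integrable_const _) ?_ ?_
  · intro r
    exact (f.continuous.measurable.comp (by fun_prop)).aestronglyMeasurable
  · intro r
    exact ae_of_all _ fun p => f.norm_coe_le_norm _
  · refine ae_of_all _ fun p => ?_
    exact (f.continuous.tendsto _).comp ((hlim.mul_const _).const_mul _)
end
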